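/- arXiv:1408.2170 — 2 statements merged into one kernel-verified Lean document; each statement's English description precedes it below -/
import Mathlib

section
/- (a) For every symmetric matrix R : Matrix (Fin 3) (Fin 3) ℝ, the metric-form tensor V_R satisfies C V_R a b c = 2 * B V_R a b c for all a, b, c. (b) There exists a Weyl-type tensor V and indices a, b, c with C V a b c ≠ 2 * B V a b c. (Theorem 2, first obstruction: C^{abc} − 2B^{abc} vanishes for metrisable projective structures but not in general.) -/
/-!
Part (a) is an identity of cubic polynomials in the six independent entries of `R`. It is natural
because everything is `SO(3)`-covariant, so `R` may be thought of as `diag(r₀, r₁, r₂)`; then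
`V_R a b c` vanishes unless `a, b, c` are distinct, and with `v_c` the value at the two pairs
`(a, b)` complementary to `c`, the only independent nonzero components of the two cubics are
`B 0 1 2 = v₀ v₁ v₂` and `C 0 1 2 = 2 v₀ v₁ v₂`. The formal proof does not diagonalise: it writes
the components of `V_R` explicitly in the entries of `R` (`VR_apply`), expands the symmetrisation
into its six terms (`sym3_eq`), and verifies the polynomial identity for each triple of indices.

For (b), the tensor with `V 0 0 1 = V 1 1 0 = 1` and all other components zero is of Weyl type
and has `C 0 0 0 = 1`, `B 0 0 0 = 0`.
-/

noncomputable section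

open Finset

/-- The Levi-Civita symbol on `Fin 3`. -/
def eps (a b c : Fin 3) : ℝ :=
  if (a, b, c) = ((0 : Fin 3), (1 : Fin 3), (2 : Fin 3)) ∨
     (a, b, c) = ((1 : Fin 3), (2 : Fin 3), (0 : Fin 3)) ∨
     (a, b, c) = ((2 : Fin 3), (0 : Fin 3), (1 : Fin 3)) then 1
  else if (a, b, c) = ((0 : Fin 3), (2 : Fin 3), (1 : Fin 3)) ∨
          (a, b, c) = ((2 : Fin 3), (1 : Fin 3), (0 : Fin 3)) ∨
          (a, b, c) = ((1 : Fin 3), (0 : Fin 3), (2 : Fin 3)) then -1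
  else 0

/-- The metric-form tensor `V_R a b c = ∑_d (R d a * ε b d c + R d b * ε a d c)`,
tensorially `V^{ab}{}_c = 2 R^{d(a} ε^{b)}{}_{dc}`. -/
def VR (R : Matrix (Fin 3) (Fin 3) ℝ) (a b c : Fin 3) : ℝ :=
  ∑ d, (R d a * eps b d c + R d b * eps a d c)

/-- A Weyl-type tensor: `V a b c = V b a c` and `∑_a V a b a = 0`. -/
def IsWeyl (V : Fin 3 → Fin 3 → Fin 3 → ℝ) : Prop :=
  (∀ a b c, V a b c = V b a c) ∧ (∀ b, ∑ a, V a b a = 0)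

/-- The quadratic obstruction `Q_{ab}{}^c = ε_{pq(a} V^{pr}{}_{b)} V^{qc}{}_r`. -/
def covQ (V : Fin 3 → Fin 3 → Fin 3 → ℝ) (a b c : Fin 3) : ℝ :=
  (1 / 2) * ∑ p, ∑ q, ∑ r, (eps p q a * V p r b + eps p q b * V p r a) * V q c r

/-- The cubic scalar `S = ε_{abc} V^{ap}{}_q V^{bq}{}_r V^{cr}{}_p`. -/
def covS (V : Fin 3 → Fin 3 → Fin 3 → ℝ) : ℝ :=
  ∑ a, ∑ b, ∑ c, ∑ p, ∑ q, ∑ r, eps a b c * V a p q * V b q r * V c r p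

/-- Symmetrisation (average) over two indices. -/
def sym2 (f : Fin 3 → Fin 3 → ℝ) (a b : Fin 3) : ℝ := (1 / 2) * (f a b + f b a)

/-- Symmetrisation (average) over three indices. -/
def sym3 (f : Fin 3 → Fin 3 → Fin 3 → ℝ) (a b c : Fin 3) : ℝ :=
  (1 / 6) * ∑ π : Equiv.Perm (Fin 3),
    f (![a, b, c] (π 0)) (![a, b, c] (π 1)) (![a, b, c] (π 2))

/-- Symmetrisation (average) over four indices. -/
def sym4 (f : Fin 3 → Fin 3 → Fin 3 → Fin 3 → ℝ) (a b c d : Fin 3) : ℝ :=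
  (1 / 24) * ∑ π : Equiv.Perm (Fin 4),
    f (![a, b, c, d] (π 0)) (![a, b, c, d] (π 1)) (![a, b, c, d] (π 2)) (![a, b, c, d] (π 3))

/-- Symmetrisation (average) over six indices. -/
def sym6 (f : Fin 3 → Fin 3 → Fin 3 → Fin 3 → Fin 3 → Fin 3 → ℝ)
    (a b c d e f' : Fin 3) : ℝ :=
  (1 / 720) * ∑ π : Equiv.Perm (Fin 6),
    f (![a, b, c, d, e, f'] (π 0)) (![a, b, c, d, e, f'] (π 1)) (![a, b, c, d, e, f'] (π 2))
      (![a, b, c, d, e, f'] (π 3)) (![a, b, c, d, e, f'] (π 4)) (![a, b, c, d, e, f'] (π 5))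

/-- `A^{ab} = ⊙(V^{ap}{}_q V^{bq}{}_p)`. -/
def covA (V : Fin 3 → Fin 3 → Fin 3 → ℝ) (a b : Fin 3) : ℝ :=
  ∑ p, ∑ q, V a p q * V b q p

/-- `B^{abc} = ⊙(V^{ap}{}_q V^{bq}{}_r V^{cr}{}_p)`. -/
def covB (V : Fin 3 → Fin 3 → Fin 3 → ℝ) (a b c : Fin 3) : ℝ :=
  sym3 (fun a b c => ∑ p, ∑ q, ∑ r, V a p q * V b q r * V c r p) a b c

/-- `C^{abc} = ⊙(V^{ab}{}_p V^{pq}{}_r V^{cr}{}_q)`. -/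
def covC (V : Fin 3 → Fin 3 → Fin 3 → ℝ) (a b c : Fin 3) : ℝ :=
  sym3 (fun a b c => ∑ p, ∑ q, ∑ r, V a b p * V p q r * V c r q) a b c

/-- `D^{abcd} = ⊙(V^{ab}{}_p V^{pq}{}_r V^{cr}{}_s V^{ds}{}_q)`. -/
def covD (V : Fin 3 → Fin 3 → Fin 3 → ℝ) (a b c d : Fin 3) : ℝ :=
  sym4 (fun a b c d => ∑ p, ∑ q, ∑ r, ∑ s, V a b p * V p q r * V c r s * V d s q) a b c d

/-- `F^{abcd} = ⊙(V^{ab}{}_p V^{cd}{}_q V^{pr}{}_s V^{qs}{}_r)`. -/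
def covF (V : Fin 3 → Fin 3 → Fin 3 → ℝ) (a b c d : Fin 3) : ℝ :=
  sym4 (fun a b c d => ∑ p, ∑ q, ∑ r, ∑ s, V a b p * V c d q * V p r s * V q s r) a b c d

/-- `J^{abcdef} = ⊙(V^{ab}{}_p V^{cd}{}_q V^{pq}{}_r V^{er}{}_s V^{st}{}_u V^{fu}{}_t)`. -/
def covJ (V : Fin 3 → Fin 3 → Fin 3 → ℝ) (a b c d e f : Fin 3) : ℝ :=
  sym6 (fun a b c d e f => ∑ p, ∑ q, ∑ r, ∑ s, ∑ t, ∑ u,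
    V a b p * V c d q * V p q r * V e r s * V s t u * V f u t) a b c d e f

/-- `K^{abcdef} = ⊙(V^{ab}{}_p V^{cd}{}_q V^{ep}{}_r V^{fq}{}_s V^{rt}{}_u V^{su}{}_t)`. -/
def covK (V : Fin 3 → Fin 3 → Fin 3 → ℝ) (a b c d e f : Fin 3) : ℝ :=
  sym6 (fun a b c d e f => ∑ p, ∑ q, ∑ r, ∑ s, ∑ t, ∑ u,
    V a b p * V c d q * V e p r * V f q s * V r t u * V s u t) a b c d e f

/-- `L^{abcdef} = ⊙(V^{ab}{}_p V^{cd}{}_q V^{pq}{}_r V^{rs}{}_t V^{et}{}_u V^{fu}{}_s)`. -/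
def covL (V : Fin 3 → Fin 3 → Fin 3 → ℝ) (a b c d e f : Fin 3) : ℝ :=
  sym6 (fun a b c d e f => ∑ p, ∑ q, ∑ r, ∑ s, ∑ t, ∑ u,
    V a b p * V c d q * V p q r * V r s t * V e t u * V f u s) a b c d e f

/-- The sextic obstruction
`T = 24J + 12K − 24L − 24B⊙B − 24C⊙C + 40B⊙C − 24A⊙D + 6A⊙F`. -/
def covT (V : Fin 3 → Fin 3 → Fin 3 → ℝ) (a b c d e f : Fin 3) : ℝ :=
  24 * covJ V a b c d e f + 12 * covK V a b c d e f - 24 * covL V a b c d e f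
    - 24 * sym6 (fun a b c d e f => covB V a b c * covB V d e f) a b c d e f
    - 24 * sym6 (fun a b c d e f => covC V a b c * covC V d e f) a b c d e f
    + 40 * sym6 (fun a b c d e f => covB V a b c * covC V d e f) a b c d e f
    - 24 * sym6 (fun a b c d e f => covA V a b * covD V c d e f) a b c d e f
    + 6 * sym6 (fun a b c d e f => covA V a b * covF V c d e f) a b c d e f

theorem sym3_eq (f : Fin 3 → Fin 3 → Fin 3 → ℝ) (a b c : Fin 3) :
    sym3 f a b c =
      (1 / 6) * (f a b c + f b a c + f c b a + f a c b + f b c a + f c a b) := by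
  have h : (univ : Finset (Equiv.Perm (Fin 3))) =
      {1, Equiv.swap 0 1, Equiv.swap 0 2, Equiv.swap 1 2,
        Equiv.swap 0 1 * Equiv.swap 1 2, Equiv.swap 1 2 * Equiv.swap 0 1} := by decide
  unfold sym3
  rw [h, sum_insert (by decide), sum_insert (by decide), sum_insert (by decide),
    sum_insert (by decide), sum_insert (by decide), sum_singleton]
  have e1 : (Equiv.swap (0 : Fin 3) 1) 2 = 2 := by decide
  have e2 : (Equiv.swap (0 : Fin 3) 2) 1 = 1 := by decide
  have e3 : (Equiv.swap (1 : Fin 3) 2) 0 = 0 := by decide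
  simp [e1, e2, e3]
  ring

/-- The components of `V_R`, listed in terms of the upper triangular entries of `R`. -/
theorem VR_apply (R : Matrix (Fin 3) (Fin 3) ℝ) (hR : ∀ i j, R i j = R j i) (a b c : Fin 3) :
    VR R a b c =
      ![![![0, -2 * R 0 2, 2 * R 0 1],
          ![R 0 2, -R 1 2, R 1 1 - R 0 0],
          ![-R 0 1, R 0 0 - R 2 2, R 1 2]],
        ![![R 0 2, -R 1 2, R 1 1 - R 0 0],
          ![2 * R 1 2, 0, -2 * R 0 1],
          ![R 2 2 - R 1 1, R 0 1, -R 0 2]],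
        ![![-R 0 1, R 0 0 - R 2 2, R 1 2],
          ![R 2 2 - R 1 1, R 0 1, -R 0 2],
          ![-2 * R 1 2, 2 * R 0 2, 0]]] a b c := by
  have h10 := hR 1 0
  have h20 := hR 2 0
  have h21 := hR 2 1
  fin_cases a <;> fin_cases b <;> fin_cases c <;>
    simp [VR, eps, Fin.sum_univ_three, h10, h20, h21] <;> ring

set_option maxHeartbeats 4000000 in
theorem covC_VR (R : Matrix (Fin 3) (Fin 3) ℝ) (hR : ∀ i j, R i j = R j i) (a b c : Fin 3) :
    covC (VR R) a b c = 2 * covB (VR R) a b c := by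
  simp only [covB, covC, sym3_eq, Fin.sum_univ_three, VR_apply R hR]
  fin_cases a <;> fin_cases b <;> fin_cases c <;> simp <;> ring

/-- The tensor with `V 0 0 1 = V 1 1 0 = 1` and all other components zero. -/
def weylExample (a b c : Fin 3) : ℝ :=
  if (a, b, c) = ((0 : Fin 3), (0 : Fin 3), (1 : Fin 3)) ∨
     (a, b, c) = ((1 : Fin 3), (1 : Fin 3), (0 : Fin 3)) then 1 else 0

theorem isWeyl_weylExample : IsWeyl weylExample := by
  constructor
  · intro a b c
    fin_cases a <;> fin_cases b <;> fin_cases c <;> simp [weylExample]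
  · intro b
    fin_cases b <;> simp [weylExample]

theorem covC_weylExample : covC weylExample 0 0 0 ≠ 2 * covB weylExample 0 0 0 := by
  simp [covB, covC, sym3_eq, Fin.sum_univ_three, weylExample]
  norm_num

/-- (a) `C = 2B` on every metric-form tensor `V_R`;
(b) there is a Weyl-type tensor for which `C ≠ 2B` at some indices. -/
theorem statement5 :
    (∀ R : Matrix (Fin 3) (Fin 3) ℝ, (∀ i j, R i j = R j i) →
      ∀ a b c, covC (VR R) a b c = 2 * covB (VR R) a b c) ∧
    (∃ V : Fin 3 → Fin 3 → Fin 3 → ℝ, IsWeyl V ∧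
      ∃ a b c, covC V a b c ≠ 2 * covB V a b c) := by
  exact ⟨covC_VR, weylExample, isWeyl_weylExample, 0, 0, 0, covC_weylExample⟩
end
end

section
/- (a) For every symmetric matrix R : Matrix (Fin 3) (Fin 3) ℝ, the metric-form tensor V_R satisfies T V_R a b c d e f = 0 for all a, b, c, d, e, f. (b) There exists a Weyl-type tensor V and indices with T V a b c d e f ≠ 0. (Theorem 1: the sextic tensor T^{abcdef} vanishes whenever the connection is projectively equivalent to a Levi-Civita connection, whilst in general it does not.) -/
/-!
`covT V` is the symmetrisation of an explicit array `preT V` (`covT_eq_sym6`). By polarization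
(`sum_perm_eq_zero`, `sym6_eq_zero`), a symmetrised array vanishes as soon as the sextic polynomial
obtained by contracting every index with the same covector `x` vanishes for all `x`. Contracting
`preT V` in this way gives an expression in the matrix `M(x)^p_q = V^{ap}_q x_a` and the covector
`w_p = V^{ab}_p x_a x_b` only (`pair_preT`).

For a metric-form tensor one may take `R` trace-free (`VR_eq_tab`). Put `y = Rx`, `z = Ry`, and let
`δ = det(x, y, z)`, `P = tr R²`. Then `w = 2 x × y`, `Rw = -2 x × z`, the quadratic covariant is
`A = P - 6 R²`, and `V(w, w) = -8 δ x`. It follows that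
`A(x) = P x·x - 6 x·z`, `B = -6δ`, `C = 2B`, `J = 2L = 96δ²`,
`F = 2D = 4 (P |x × y|² - 6 |x × z|²)`, while `K = A(m, m)` with
`m = w M(x) = -4 (x·z) x + 2 (x·y) y + 2 (x·x) z`.
So `T/12 = K - 24δ² - A D`, and this is zero once `δ²` is written as a Gram determinant and the
scalar products `y·z`, `z·z` are reduced by the Cayley-Hamilton identity `R³ = (P/2) R + det R`
(`pair_preT_tab`).

For the second claim, at indices `(0,0,0,0,0,0)` all symmetrisations are trivial, and a sparse
integral tensor with `covT = 24` is exhibited (`covT_witness`).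
-/

noncomputable section

open Finset

/-! ### Polarization -/

/-- Contraction of all `n` slots of an index array with the same covector `x`: the homogeneous
polynomial of degree `n` attached to `F`. -/
def diagForm {n : ℕ} (x : Fin 3 → ℝ) (F : (Fin n → Fin 3) → ℝ) : ℝ :=
  ∑ i : Fin n → Fin 3, (∏ k, x (i k)) * F i

lemma sum_superset_neg_one_pow {n : ℕ} (t : Finset (Fin n)) :
    (∑ s : Finset (Fin n), if t ⊆ s then (-1 : ℝ) ^ s.card else 0)
      = if t = univ then (-1) ^ n else 0 := by
  split_ifs with ht
  · subst ht
    simp [Finset.univ_subset_iff]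
  · obtain ⟨k, hk⟩ : ∃ k, k ∉ t := by
      by_contra! h
      exact ht (Finset.eq_univ_iff_forall.2 h)
    -- Toggling membership of `k` is a sign-reversing involution.
    refine Finset.sum_involution
      (fun s _ => if k ∈ s then s.erase k else insert k s) ?_ ?_ (by simp) ?_
    · intro s _
      by_cases hs : k ∈ s
      · have h1 : t ⊆ s.erase k ↔ t ⊆ s := by
          rw [Finset.subset_erase]; exact and_iff_left hk
        have h2 := Finset.card_erase_add_one hs
        simp only [hs, if_true, h1]
        rw [← h2]
        split_ifs <;> ring
      · have h1 : t ⊆ insert k s ↔ t ⊆ s := Finset.subset_insert_iff_of_notMem hk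
        simp only [hs, if_false, h1, Finset.card_insert_of_notMem hs]
        split_ifs <;> ring
    · intro s _ _
      by_cases hs : k ∈ s
      · simp only [hs, if_true]
        intro h
        rw [← h] at hs
        simp at hs
      · simp only [hs, if_false]
        intro h
        rw [← h] at hs
        simp at hs
    · intro s _
      by_cases hs : k ∈ s
      · simp [hs]
      · simp [hs]

/-- Evaluating the polynomial of `F` at a sum of basis covectors `∑_{j ∈ s} e_{idx j}`. -/
lemma diagForm_sum_single {n : ℕ} (F : (Fin n → Fin 3) → ℝ) (idx : Fin n → Fin 3)
    (s : Finset (Fin n)) :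
    diagForm (fun c => ∑ j ∈ s, if idx j = c then (1 : ℝ) else 0) F
      = ∑ r : Fin n → Fin n, if univ.image r ⊆ s then F (idx ∘ r) else 0 := by
  have hprod : ∀ i : Fin n → Fin 3,
      (∏ k, ∑ j ∈ s, if idx j = i k then (1 : ℝ) else 0)
        = ∑ r ∈ Fintype.piFinset (fun _ : Fin n => s), if idx ∘ r = i then 1 else 0 := by
    intro i
    rw [Finset.prod_univ_sum]
    refine Finset.sum_congr rfl fun r _ => ?_
    rw [Finset.prod_ite_zero]
    simp [funext_iff]
  unfold diagForm
  simp only [hprod, Finset.sum_mul]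
  rw [Finset.sum_comm, ← Finset.sum_filter]
  refine Finset.sum_congr ?_ fun r _ => by simp
  ext r
  simp [Fintype.mem_piFinset, Finset.subset_iff]

/-- Polarization: if the polynomial of `F` vanishes identically, then so does the sum of `F` over
all rearrangements of its indices. -/
lemma sum_perm_eq_zero {n : ℕ} (F : (Fin n → Fin 3) → ℝ) (h : ∀ x, diagForm x F = 0)
    (idx : Fin n → Fin 3) : ∑ π : Equiv.Perm (Fin n), F (idx ∘ π) = 0 := by
  have h0 : ∑ s : Finset (Fin n), (-1 : ℝ) ^ s.card *
      ∑ r : Fin n → Fin n, (if univ.image r ⊆ s then F (idx ∘ r) else 0) = 0 :=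
    Finset.sum_eq_zero fun s _ => by rw [← diagForm_sum_single, h, mul_zero]
  simp only [Finset.mul_sum] at h0
  rw [Finset.sum_comm] at h0
  have h1 : ∀ r : Fin n → Fin n,
      ∑ s : Finset (Fin n), (-1 : ℝ) ^ s.card * (if univ.image r ⊆ s then F (idx ∘ r) else 0)
        = if Function.Bijective r then (-1) ^ n * F (idx ∘ r) else 0 := by
    intro r
    have hr : univ.image r = univ ↔ Function.Bijective r := by
      rw [← Finite.surjective_iff_bijective, Finset.eq_univ_iff_forall]
      simp [Function.Surjective]
    have := sum_superset_neg_one_pow (univ.image r)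
    simp only [hr] at this
    calc _ = (∑ s : Finset (Fin n), if univ.image r ⊆ s then (-1 : ℝ) ^ s.card else 0)
            * F (idx ∘ r) := by
          rw [Finset.sum_mul]
          exact Finset.sum_congr rfl fun s _ => by split_ifs <;> ring
      _ = _ := by rw [this]; split_ifs <;> ring
  simp only [h1] at h0
  rw [← Finset.sum_filter, ← Finset.mul_sum] at h0
  have h2 : ∑ r : Fin n → Fin n with Function.Bijective r, F (idx ∘ r) = 0 := by
    rcases mul_eq_zero.1 h0 with h | h
    · exact absurd h (by positivity)
    · exact h
  rw [← h2]
  refine Finset.sum_bij (fun π _ => ⇑π)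
    (fun π _ => Finset.mem_filter.2 ⟨Finset.mem_univ _, π.bijective⟩) (by simp) ?_ (by simp)
  intro r hr
  exact ⟨Equiv.ofBijective r (by simpa using hr), by simp, by ext; simp⟩

lemma diagForm_comp_perm {n : ℕ} (x : Fin 3 → ℝ) (F : (Fin n → Fin 3) → ℝ)
    (π : Equiv.Perm (Fin n)) : diagForm x (fun i => F (i ∘ π)) = diagForm x F := by
  unfold diagForm
  refine Fintype.sum_equiv (Equiv.arrowCongr π.symm (Equiv.refl _)) _ _ fun i => ?_
  have : (Equiv.arrowCongr π.symm (Equiv.refl _)) i = i ∘ π := by ext; simp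
  rw [this]
  congr 1
  exact (Equiv.prod_comp π fun k => x (i k)).symm

/-- Symmetrising an array does not change its polynomial (up to the factor `n!`). -/
lemma diagForm_sym {n : ℕ} (x : Fin 3 → ℝ) (F : (Fin n → Fin 3) → ℝ) :
    diagForm x (fun i => ∑ π : Equiv.Perm (Fin n), F (i ∘ π)) = n.factorial * diagForm x F := by
  have : diagForm x (fun i => ∑ π : Equiv.Perm (Fin n), F (i ∘ π))
      = ∑ π : Equiv.Perm (Fin n), diagForm x (fun i => F (i ∘ π)) := by
    simp only [diagForm, Finset.mul_sum]
    rw [Finset.sum_comm]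
  simp only [this, diagForm_comp_perm]
  simp [Fintype.card_perm]

/-! ### Contracting the sextic covariant with a covector -/

/-- Contraction of a single index with the covector `x`. -/
def pair (x g : Fin 3 → ℝ) : ℝ := ∑ a, x a * g a

lemma diagForm_succ {n : ℕ} (x : Fin 3 → ℝ) (F : (Fin (n + 1) → Fin 3) → ℝ) :
    diagForm x F = pair x fun a => diagForm x fun i => F (Fin.cons a i) := by
  unfold diagForm pair
  rw [← (Fin.consEquiv fun _ : Fin (n + 1) => Fin 3).sum_comp, Fintype.sum_prod_type]
  refine Finset.sum_congr rfl fun a _ => ?_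
  rw [Finset.mul_sum]
  refine Finset.sum_congr rfl fun i _ => ?_
  simp [Fin.consEquiv, Fin.prod_univ_succ, mul_assoc]

lemma diagForm_zero (x : Fin 3 → ℝ) (F : (Fin 0 → Fin 3) → ℝ) :
    diagForm x F = F Fin.elim0 := by
  simp [diagForm]
  congr

lemma pair_sum (x : Fin 3 → ℝ) (g : Fin 3 → Fin 3 → ℝ) :
    pair x (fun a => ∑ p, g a p) = ∑ p, pair x fun a => g a p := by
  simp only [pair, Finset.mul_sum]
  exact Finset.sum_comm

lemma pair_mul_left (x g : Fin 3 → ℝ) (c : ℝ) : pair x (fun a => c * g a) = c * pair x g := by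
  simp only [pair, Finset.mul_sum]
  exact Finset.sum_congr rfl fun a _ => by ring

lemma pair_mul_right (x g : Fin 3 → ℝ) (c : ℝ) : pair x (fun a => g a * c) = pair x g * c := by
  simp only [pair, Finset.sum_mul]
  exact Finset.sum_congr rfl fun a _ => by ring

lemma pair_add (x g h : Fin 3 → ℝ) : pair x (fun a => g a + h a) = pair x g + pair x h := by
  simp only [pair, mul_add, Finset.sum_add_distrib]

lemma pair_sub (x g h : Fin 3 → ℝ) : pair x (fun a => g a - h a) = pair x g - pair x h := by
  simp only [pair, mul_sub, Finset.sum_sub_distrib]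

lemma pair_sym3 (x : Fin 3 → ℝ) (f : Fin 3 → Fin 3 → Fin 3 → ℝ) :
    (pair x fun a => pair x fun b => pair x fun c => sym3 f a b c)
      = pair x fun a => pair x fun b => pair x fun c => f a b c := by
  have h := diagForm_sym x fun i : Fin 3 → Fin 3 => f (i 0) (i 1) (i 2)
  simp only [diagForm_succ, diagForm_zero] at h
  have h' : (pair x fun a => pair x fun b => pair x fun c => 6 * sym3 f a b c)
      = 6 * pair x fun a => pair x fun b => pair x fun c => f a b c := by
    refine Eq.trans ?_ (h.trans (by norm_num [Nat.factorial]; rfl))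
    congr! with a b c
    rw [sym3, ← mul_assoc]
    norm_num
    rfl
  simp only [pair_mul_left] at h'
  linarith

lemma pair_sym4 (x : Fin 3 → ℝ) (f : Fin 3 → Fin 3 → Fin 3 → Fin 3 → ℝ) :
    (pair x fun a => pair x fun b => pair x fun c => pair x fun d => sym4 f a b c d)
      = pair x fun a => pair x fun b => pair x fun c => pair x fun d => f a b c d := by
  have h := diagForm_sym x fun i : Fin 4 → Fin 3 => f (i 0) (i 1) (i 2) (i 3)
  simp only [diagForm_succ, diagForm_zero] at h
  have h' : (pair x fun a => pair x fun b => pair x fun c => pair x fun d => 24 * sym4 f a b c d)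
      = 24 * pair x fun a => pair x fun b => pair x fun c => pair x fun d => f a b c d := by
    refine Eq.trans ?_ (h.trans (by norm_num [Nat.factorial]; rfl))
    congr! with a b c d
    rw [sym4, ← mul_assoc]
    norm_num
    rfl
  simp only [pair_mul_left] at h'
  linarith

/-- A sextic array whose polynomial vanishes has vanishing symmetrisation. -/
lemma sym6_eq_zero (f : Fin 3 → Fin 3 → Fin 3 → Fin 3 → Fin 3 → Fin 3 → ℝ)
    (h : ∀ x, (pair x fun a => pair x fun b => pair x fun c => pair x fun d => pair x fun e =>
      pair x fun f' => f a b c d e f') = 0) (a b c d e f' : Fin 3) :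
    sym6 f a b c d e f' = 0 := by
  have h1 := sum_perm_eq_zero
    (fun i : Fin 6 → Fin 3 => f (i 0) (i 1) (i 2) (i 3) (i 4) (i 5)) (fun x => by
      simp only [diagForm_succ, diagForm_zero]
      exact h x) ![a, b, c, d, e, f']
  rw [sym6]
  exact mul_eq_zero_of_right _ h1

/-- The array whose symmetrisation is `covT V`; the factors `covA`, ..., `covF` are kept in their
symmetrised form. -/
def preT (V : Fin 3 → Fin 3 → Fin 3 → ℝ) (a b c d e f : Fin 3) : ℝ :=
  24 * (∑ p, ∑ q, ∑ r, ∑ s, ∑ t, ∑ u,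
      V a b p * V c d q * V p q r * V e r s * V s t u * V f u t)
    + 12 * (∑ p, ∑ q, ∑ r, ∑ s, ∑ t, ∑ u,
      V a b p * V c d q * V e p r * V f q s * V r t u * V s u t)
    - 24 * (∑ p, ∑ q, ∑ r, ∑ s, ∑ t, ∑ u,
      V a b p * V c d q * V p q r * V r s t * V e t u * V f u s)
    - 24 * (covB V a b c * covB V d e f) - 24 * (covC V a b c * covC V d e f)
    + 40 * (covB V a b c * covC V d e f) - 24 * (covA V a b * covD V c d e f)
    + 6 * (covA V a b * covF V c d e f)

lemma covT_eq_sym6 (V : Fin 3 → Fin 3 → Fin 3 → ℝ) (a b c d e f : Fin 3) :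
    covT V a b c d e f = sym6 (preT V) a b c d e f := by
  unfold covT covJ covK covL preT sym6
  simp only [Finset.sum_add_distrib, Finset.sum_sub_distrib, ← Finset.mul_sum]
  ring

lemma pair_intJ (V : Fin 3 → Fin 3 → Fin 3 → ℝ) (x : Fin 3 → ℝ) (M : Fin 3 → Fin 3 → ℝ)
    (w : Fin 3 → ℝ) (hM : ∀ p q, pair x (fun a => V a p q) = M p q)
    (hw : ∀ p, pair x (fun a => pair x fun b => V a b p) = w p) :
    (pair x fun a => pair x fun b => pair x fun c => pair x fun d => pair x fun e =>
      pair x fun f => ∑ p, ∑ q, ∑ r, ∑ s, ∑ t, ∑ u,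
        V a b p * V c d q * V p q r * V e r s * V s t u * V f u t)
    = ∑ p, ∑ q, ∑ r, ∑ s, ∑ t, ∑ u, w p * w q * V p q r * M r s * V s t u * M u t := by
  simp only [pair_sum, pair_mul_left, pair_mul_right, hM, hw]

lemma pair_intK (V : Fin 3 → Fin 3 → Fin 3 → ℝ) (x : Fin 3 → ℝ) (M : Fin 3 → Fin 3 → ℝ)
    (w : Fin 3 → ℝ) (hM : ∀ p q, pair x (fun a => V a p q) = M p q)
    (hw : ∀ p, pair x (fun a => pair x fun b => V a b p) = w p) :
    (pair x fun a => pair x fun b => pair x fun c => pair x fun d => pair x fun e =>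
      pair x fun f => ∑ p, ∑ q, ∑ r, ∑ s, ∑ t, ∑ u,
        V a b p * V c d q * V e p r * V f q s * V r t u * V s u t)
    = ∑ p, ∑ q, ∑ r, ∑ s, ∑ t, ∑ u, w p * w q * M p r * M q s * V r t u * V s u t := by
  simp only [pair_sum, pair_mul_left, pair_mul_right, hM, hw]

lemma pair_intL (V : Fin 3 → Fin 3 → Fin 3 → ℝ) (x : Fin 3 → ℝ) (M : Fin 3 → Fin 3 → ℝ)
    (w : Fin 3 → ℝ) (hM : ∀ p q, pair x (fun a => V a p q) = M p q)
    (hw : ∀ p, pair x (fun a => pair x fun b => V a b p) = w p) :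
    (pair x fun a => pair x fun b => pair x fun c => pair x fun d => pair x fun e =>
      pair x fun f => ∑ p, ∑ q, ∑ r, ∑ s, ∑ t, ∑ u,
        V a b p * V c d q * V p q r * V r s t * V e t u * V f u s)
    = ∑ p, ∑ q, ∑ r, ∑ s, ∑ t, ∑ u, w p * w q * V p q r * V r s t * M t u * M u s := by
  simp only [pair_sum, pair_mul_left, pair_mul_right, hM, hw]

/-- The polynomial of `covT V`, in terms of `M(x)` and `w(x)`. -/
lemma pair_preT (V : Fin 3 → Fin 3 → Fin 3 → ℝ) (x : Fin 3 → ℝ) (M : Fin 3 → Fin 3 → ℝ)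
    (w : Fin 3 → ℝ) (hM : ∀ p q, pair x (fun a => V a p q) = M p q)
    (hw : ∀ p, pair x (fun a => pair x fun b => V a b p) = w p) :
    (pair x fun a => pair x fun b => pair x fun c => pair x fun d => pair x fun e =>
      pair x fun f => preT V a b c d e f)
    = 24 * (∑ p, ∑ q, ∑ r, ∑ s, ∑ t, ∑ u, w p * w q * V p q r * M r s * V s t u * M u t)
    + 12 * (∑ p, ∑ q, ∑ r, ∑ s, ∑ t, ∑ u, w p * w q * M p r * M q s * V r t u * V s u t)
    - 24 * (∑ p, ∑ q, ∑ r, ∑ s, ∑ t, ∑ u, w p * w q * V p q r * V r s t * M t u * M u s)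
    - 24 * (∑ p, ∑ q, ∑ r, M p q * M q r * M r p) ^ 2
    - 24 * (∑ p, ∑ q, ∑ r, w p * V p q r * M r q) ^ 2
    + 40 * ((∑ p, ∑ q, ∑ r, M p q * M q r * M r p) * ∑ p, ∑ q, ∑ r, w p * V p q r * M r q)
    - 24 * ((∑ p, ∑ q, M p q * M q p) *
        ∑ p, ∑ q, ∑ r, ∑ s, w p * V p q r * M r s * M s q)
    + 6 * ((∑ p, ∑ q, M p q * M q p) *
        ∑ p, ∑ q, ∑ r, ∑ s, w p * w q * V p r s * V q s r) := by
  unfold preT covA covB covC covD covF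
  simp only [pair_add, pair_sub]
  simp only [pair_mul_left _ _ (24 : ℝ), pair_mul_left _ _ (12 : ℝ), pair_mul_left _ _ (40 : ℝ),
    pair_mul_left _ _ (6 : ℝ), pair_intJ V x M w hM hw, pair_intK V x M w hM hw,
    pair_intL V x M w hM hw]
  simp only [pair_mul_left, pair_mul_right, pair_sym3, pair_sym4]
  simp only [pair_mul_left, pair_mul_right, pair_sum, hM, hw]
  ring

/-! ### Vector algebra of metric-form tensors -/

/-- The action of the trace-free symmetric matrix with rows `(r, s, t)`, `(s, u, v)`,
`(t, v, -r-u)` on vectors. -/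
def act (r s t u v : ℝ) (x : Fin 3 → ℝ) : Fin 3 → ℝ :=
  ![r * x 0 + s * x 1 + t * x 2, s * x 0 + u * x 1 + v * x 2, t * x 0 + v * x 1 + (-r - u) * x 2]

/-- The components of the metric-form tensor of the trace-free matrix of `act`. -/
def tab (r s t u v : ℝ) : Fin 3 → Fin 3 → Fin 3 → ℝ :=
  ![![![0, -2 * t, 2 * s], ![t, -v, u - r], ![-s, 2 * r + u, v]],
    ![![t, -v, u - r], ![2 * v, 0, -2 * s], ![-r - 2 * u, s, -t]],
    ![![-s, 2 * r + u, v], ![-r - 2 * u, s, -t], ![-2 * v, 2 * t, 0]]]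

/-- `V_R` only sees the trace-free part of `R`, because `V_R = 0` for `R` the identity. -/
lemma VR_eq_tab (R : Matrix (Fin 3) (Fin 3) ℝ) (hR : ∀ i j, R i j = R j i) :
    VR R = tab (R 0 0 - (R 0 0 + R 1 1 + R 2 2) / 3) (R 0 1) (R 0 2)
      (R 1 1 - (R 0 0 + R 1 1 + R 2 2) / 3) (R 1 2) := by
  funext a b c
  have h1 := hR 1 0
  have h2 := hR 2 0
  have h3 := hR 2 1
  fin_cases a <;> fin_cases b <;> fin_cases c <;>
    simp [VR, eps, tab, Fin.sum_univ_three, h1, h2, h3] <;> ring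

/-- The standard inner product on `ℝ³`. -/
def dot (x y : Fin 3 → ℝ) : ℝ := x 0 * y 0 + x 1 * y 1 + x 2 * y 2

/-- The cross product on `ℝ³`. -/
def crs (x y : Fin 3 → ℝ) : Fin 3 → ℝ :=
  ![x 1 * y 2 - x 2 * y 1, x 2 * y 0 - x 0 * y 2, x 0 * y 1 - x 1 * y 0]

/-- The matrix `M(x)^p_q = V^{ap}_q x_a`. -/
def mat (r s t u v : ℝ) (x : Fin 3 → ℝ) (p q : Fin 3) : ℝ := pair x fun a => tab r s t u v a p q

/-- `tr R²`. -/
def trSq (r s t u v : ℝ) : ℝ := r ^ 2 + u ^ 2 + (r + u) ^ 2 + 2 * (s ^ 2 + t ^ 2 + v ^ 2)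

/-- `det R`. -/
def detR (r s t u v : ℝ) : ℝ :=
  r * (u * (-r - u) - v ^ 2) - s * (s * (-r - u) - t * v) + t * (s * v - t * u)

section

variable (r s t u v : ℝ) (x y z : Fin 3 → ℝ)

lemma dot_act : dot (act r s t u v x) y = dot x (act r s t u v y) := by
  simp [dot, act]; ring

/-- Cayley-Hamilton for a trace-free matrix. -/
lemma act_act_act (i : Fin 3) :
    act r s t u v (act r s t u v (act r s t u v x)) i
      = trSq r s t u v / 2 * act r s t u v x i + detR r s t u v * x i := by
  fin_cases i <;> simp [act, trSq, detR] <;> ring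

/-- A trace-free symmetric matrix acts as minus a derivation of the cross product. -/
lemma act_crs (i : Fin 3) : act r s t u v (crs x y) i
    = -(crs (act r s t u v x) y i + crs x (act r s t u v y) i) := by
  fin_cases i <;> simp [act, crs] <;> ring

/-- `V(x, x) = 2 x × Rx`. -/
lemma tab_diag (p : Fin 3) : (pair x fun a => pair x fun b => tab r s t u v a b p)
    = 2 * crs x (act r s t u v x) p := by
  fin_cases p <;> simp [act, crs, pair, tab, Fin.sum_univ_three] <;> ring

/-- The quadratic covariant `A^{ab} = tr(R²) δ^{ab} - 6 (R²)^{ab}`, with one slot contracted. -/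
lemma tab_mat (p : Fin 3) : ∑ q, ∑ k, tab r s t u v p q k * mat r s t u v x k q
    = trSq r s t u v * x p - 6 * act r s t u v (act r s t u v x) p := by
  fin_cases p <;> simp [act, mat, trSq, pair, tab, Fin.sum_univ_three] <;> ring

lemma mat_mat : ∑ q, ∑ k, mat r s t u v x q k * mat r s t u v y k q
    = trSq r s t u v * dot x y - 6 * dot (act r s t u v x) (act r s t u v y) := by
  simp [act, mat, trSq, pair, tab, dot, Fin.sum_univ_three]; ring

/-- `M(x) v = Rx × v - R(x × v)`. -/
lemma mat_apply (p : Fin 3) : ∑ q, mat r s t u v x p q * y q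
    = crs (act r s t u v x) y p - act r s t u v (crs x y) p := by
  fin_cases p <;> simp [act, mat, pair, tab, crs, Fin.sum_univ_three] <;> ring

/-- `v M(x) = v × Rx + x × Rv`. -/
lemma apply_mat (q : Fin 3) : ∑ p, y p * mat r s t u v x p q
    = crs y (act r s t u v x) q + crs x (act r s t u v y) q := by
  fin_cases q <;> simp [act, mat, pair, tab, crs, Fin.sum_univ_three] <;> ring

/-- `tr M(x)³ = -6 det(x, Rx, R²x)`. -/
lemma mat_cube : ∑ p, ∑ q, ∑ k, mat r s t u v x p q * mat r s t u v x q k * mat r s t u v x k p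
    = -6 * dot x (crs (act r s t u v x) (act r s t u v (act r s t u v x))) := by
  simp [act, mat, pair, tab, crs, dot, Fin.sum_univ_three]; ring

/-- The quadratic form of `A`. -/
lemma tab_tab_quad : ∑ p, ∑ q, y p * y q *
      (∑ k, ∑ l, tab r s t u v p k l * tab r s t u v q l k)
    = trSq r s t u v * dot y y - 6 * dot (act r s t u v y) (act r s t u v y) := by
  simp [act, trSq, tab, dot, Fin.sum_univ_three]; ring

/-- The vector `p ↦ tr(M(e_p) M(x)²)`, whose pairings with `x`, `w` and `V(w, w)` give `B`, `D`
and `L`. -/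
lemma tab_mat_mat (p : Fin 3) :
    ∑ q, ∑ k, ∑ l, tab r s t u v p q k * mat r s t u v x k l * mat r s t u v x l q
    = -6 * crs (act r s t u v x) (act r s t u v (act r s t u v x)) p
      - 2 * trSq r s t u v * crs x (act r s t u v x) p := by
  fin_cases p <;> simp [act, mat, trSq, pair, tab, crs, Fin.sum_univ_three] <;> ring

/-- `M(x)` applied to the vector of `tab_mat`. -/
lemma mat_tab_mat (p : Fin 3) :
    ∑ q, mat r s t u v x p q *
      (trSq r s t u v * x q - 6 * act r s t u v (act r s t u v x) q)
    = -12 * crs (act r s t u v x) (act r s t u v (act r s t u v x)) p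
      - 4 * trSq r s t u v * crs x (act r s t u v x) p := by
  fin_cases p <;> simp [act, mat, trSq, pair, tab, crs, Fin.sum_univ_three] <;> ring

lemma tab_quad : ∑ p, ∑ q, y p * y q * (∑ k, tab r s t u v p q k * z k)
    = 2 * dot (crs y (act r s t u v y)) z := by
  simp [act, tab, dot, crs, Fin.sum_univ_three]; ring

/-- `Rw = -2 x × z` for `w = 2 x × y`, `y = Rx`, `z = Ry`. -/
lemma act_two_crs : act r s t u v (fun i => 2 * crs x (act r s t u v x) i)
    = fun i => -2 * crs x (act r s t u v (act r s t u v x)) i := by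
  funext i
  fin_cases i <;> simp [act, crs] <;> ring

/-- `(2 x × y) × (-2 x × z) = -4 det(x, y, z) x`. -/
lemma dot_crs_crs (n : Fin 3 → ℝ) :
    dot (crs (fun i => 2 * crs x y i) (fun i => -2 * crs x z i)) n
      = -4 * dot x (crs y z) * dot x n := by
  simp [dot, crs]; ring

lemma dot_crs_self (k : ℝ) : dot (fun i => k * crs x y i) (fun i => k * crs x y i)
    = k ^ 2 * (dot x x * dot y y - dot x y ^ 2) := by
  simp [dot, crs]; ring

lemma crs_triple (q : Fin 3) :
    crs (fun i => 2 * crs x y i) y q + crs x (fun i => -2 * crs x z i) q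
      = (-2 * dot y y - 2 * dot x z) * x q + 2 * dot x y * y q + 2 * dot x x * z q := by
  fin_cases q <;> simp [dot, crs] <;> ring

lemma dot_comb (α β γ : ℝ) :
    dot (fun i => α * x i + β * y i + γ * z i) (fun i => α * x i + β * y i + γ * z i)
      = α ^ 2 * dot x x + β ^ 2 * dot y y + γ ^ 2 * dot z z
        + 2 * (α * β * dot x y + α * γ * dot x z + β * γ * dot y z) := by
  simp [dot]; ring

lemma act_comb (α β γ : ℝ) : act r s t u v (fun i => α * x i + β * y i + γ * z i)
    = fun i => α * act r s t u v x i + β * act r s t u v y i + γ * act r s t u v z i := by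
  funext i
  fin_cases i <;> simp [act] <;> ring

/-- The Gram determinant. -/
lemma dot_crs_sq : dot x (crs y z) ^ 2
    = dot x x * (dot y y * dot z z - dot y z ^ 2) - dot x y * (dot x y * dot z z - dot y z * dot x z)
      + dot x z * (dot x y * dot y z - dot y y * dot x z) := by
  simp [dot, crs]; ring

lemma sum_quad_comp (w : Fin 3 → ℝ) (M A : Fin 3 → Fin 3 → ℝ) :
    ∑ p, ∑ q, ∑ k, ∑ l, w p * w q * M p k * M q l * A k l
      = ∑ k, ∑ l, (∑ p, w p * M p k) * (∑ q, w q * M q l) * A k l := by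
  simp only [Fin.sum_univ_three]; ring

/-- The polynomial of the sextic covariant vanishes on every metric-form tensor. -/
lemma pair_preT_tab :
    (pair x fun a => pair x fun b => pair x fun c => pair x fun d => pair x fun e =>
      pair x fun f => preT (tab r s t u v) a b c d e f) = 0 := by
  rw [pair_preT (tab r s t u v) x (mat r s t u v x)
    (fun p => 2 * crs x (act r s t u v x) p) (fun p q => rfl) (fun p => tab_diag r s t u v x p)]
  set w : Fin 3 → ℝ := fun p => 2 * crs x (act r s t u v x) p with hw
  have hRw := act_two_crs r s t u v x
  rw [← hw] at hRw
  set y := act r s t u v x with hy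
  set z := act r s t u v y with hz
  set M := mat r s t u v x with hM
  set P := trSq r s t u v with hP
  have hRz : act r s t u v z = fun i => P / 2 * y i + detR r s t u v * x i :=
    funext fun i => act_act_act r s t u v x i
  have hyy : dot y y = dot x z := dot_act r s t u v x y
  have hyz : dot y z = P / 2 * dot x y + detR r s t u v * dot x x := by
    rw [hy, dot_act, hRz, ← hy]; simp only [dot]; ring
  have hzz : dot z z = P / 2 * dot x z + detR r s t u v * dot x y := by
    rw [hz, dot_act, ← hz, hRz, ← hyy]; simp only [dot]; ring
  have hAq : ∑ p, ∑ q, M p q * M q p = P * dot x x - 6 * dot x z := by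
    rw [← hyy]; exact mat_mat r s t u v x x
  have hB : ∑ p, ∑ q, ∑ k, M p q * M q k * M k p = -6 * dot x (crs y z) := mat_cube r s t u v x
  have hC : ∑ p, ∑ q, ∑ k, w p * tab r s t u v p q k * M k q = -12 * dot x (crs y z) := by
    simp only [mul_assoc, ← Finset.mul_sum, hM, tab_mat]
    simp only [← hP, ← hy, ← hz, hw, Fin.sum_univ_three, dot]
    simp [crs]; ring
  have hD : ∑ p, ∑ q, ∑ k, ∑ l, w p * tab r s t u v p q k * M k l * M l q
      = 2 * (P * (dot x x * dot x z - dot x y ^ 2) - 6 * (dot x x * dot z z - dot x z ^ 2)) := by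
    have h := tab_mat_mat r s t u v x
    simp only [mul_assoc, ← Finset.mul_sum] at h
    simp only [mul_assoc, ← Finset.mul_sum, hM, h]
    rw [hzz, ← hyy]
    have e1 : ∑ p, w p * (-6 * crs y z p - 2 * (P * crs x y p))
        = -12 * (dot x y * dot y z - dot y y * dot x z)
          - 4 * P * (dot x x * dot y y - dot x y ^ 2) := by
      simp only [hw, Fin.sum_univ_three, dot]
      simp [crs]; ring
    refine e1.trans ?_
    rw [hyz, ← hyy]; ring
  have hF : ∑ p, ∑ q, ∑ k, ∑ l, w p * w q * tab r s t u v p k l * tab r s t u v q l k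
      = 4 * (P * (dot x x * dot x z - dot x y ^ 2) - 6 * (dot x x * dot z z - dot x z ^ 2)) := by
    have h := tab_tab_quad r s t u v w
    simp only [mul_assoc, ← Finset.mul_sum] at h ⊢
    rw [h, hRw, hw, dot_crs_self, dot_crs_self, hyy]
    ring
  have hJ : ∑ p, ∑ q, ∑ k, ∑ l, ∑ i, ∑ j, w p * w q * tab r s t u v p q k * M k l *
      tab r s t u v l i j * M j i = 96 * dot x (crs y z) ^ 2 := by
    have h := tab_quad r s t u v w
    simp only [mul_assoc, ← Finset.mul_sum] at h
    simp only [mul_assoc, ← Finset.mul_sum, hM, tab_mat, mat_tab_mat]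
    rw [h, hRw, hw, dot_crs_crs]
    simp only [dot]
    simp [crs]; ring
  have hL : ∑ p, ∑ q, ∑ k, ∑ l, ∑ i, ∑ j, w p * w q * tab r s t u v p q k *
      tab r s t u v k l i * M i j * M j l = 48 * dot x (crs y z) ^ 2 := by
    have h := tab_quad r s t u v w
    have h' := tab_mat_mat r s t u v x
    simp only [mul_assoc, ← Finset.mul_sum] at h h'
    simp only [mul_assoc, ← Finset.mul_sum, hM, h']
    rw [h, hRw, hw, dot_crs_crs]
    simp only [dot]
    simp [crs]; ring
  -- `m = w M(x)`, and its image `Rm`.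
  set m : Fin 3 → ℝ :=
    fun i => -4 * dot x z * x i + 2 * dot x y * y i + 2 * dot x x * z i with hm
  set Rm : Fin 3 → ℝ := fun i => 2 * dot x x * detR r s t u v * x i
    + (P * dot x x - 4 * dot x z) * y i + 2 * dot x y * z i with hRm'
  have hwM : ∀ q, ∑ p, w p * M p q = m q := by
    intro q
    rw [hM, apply_mat, hRw, ← hy, hw, crs_triple, hyy, hm]; ring
  have hRm : act r s t u v m = Rm := by
    rw [hm, act_comb, ← hy, ← hz, hRz, hRm']
    funext i; ring
  have hK : ∑ p, ∑ q, ∑ k, ∑ l, ∑ i, ∑ j, w p * w q * M p k * M q l *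
      tab r s t u v k i j * tab r s t u v l j i
      = P * dot m m - 6 * dot Rm Rm := by
    have h := sum_quad_comp w M
      (fun k l => ∑ i, ∑ j, tab r s t u v k i j * tab r s t u v l j i)
    have h2 := tab_tab_quad r s t u v m
    simp only [mul_assoc, ← Finset.mul_sum] at h h2 ⊢
    simp only [hwM] at h
    rw [h, h2, hRm]
  rw [hAq, hB, hC, hD, hF, hJ, hK, hL, hm, hRm', dot_comb, dot_comb, mul_pow, mul_pow]
  have hδ := dot_crs_sq x y z
  rw [hyz, hyy, hzz] at hδ
  rw [hyz, hyy, hzz]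
  linear_combination (-288) * hδ

end

/-! ### A Weyl-type tensor with non-zero sextic covariant -/

/-- A Weyl-type tensor on which the only non-vanishing term of `covT` at `(0,0,0,0,0,0)` is the one
coming from `covL`. -/
def witness : Fin 3 → Fin 3 → Fin 3 → ℝ :=
  ![![![0, 1, 0], ![0, 0, -1], ![0, 0, 0]],
    ![![0, 0, -1], ![0, 0, -1], ![0, 0, 0]],
    ![![0, 0, 0], ![0, 0, 0], ![-1, 0, 0]]]

lemma isWeyl_witness : IsWeyl witness := by
  constructor
  · intro a b c
    fin_cases a <;> fin_cases b <;> fin_cases c <;> simp [witness]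
  · intro b
    fin_cases b <;> simp [witness, Fin.sum_univ_three]

lemma sym3_zero (f : Fin 3 → Fin 3 → Fin 3 → ℝ) : sym3 f 0 0 0 = f 0 0 0 := by
  have h (k : Fin 3) : (![0, 0, 0] : Fin 3 → Fin 3) k = 0 := by fin_cases k <;> rfl
  simp [sym3, h, Fintype.card_perm, Nat.factorial]

lemma sym4_zero (f : Fin 3 → Fin 3 → Fin 3 → Fin 3 → ℝ) : sym4 f 0 0 0 0 = f 0 0 0 0 := by
  have h (k : Fin 4) : (![0, 0, 0, 0] : Fin 4 → Fin 3) k = 0 := by fin_cases k <;> rfl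
  simp [sym4, h, Fintype.card_perm, Nat.factorial]

lemma sym6_zero (f : Fin 3 → Fin 3 → Fin 3 → Fin 3 → Fin 3 → Fin 3 → ℝ) :
    sym6 f 0 0 0 0 0 0 = f 0 0 0 0 0 0 := by
  have h (k : Fin 6) : (![0, 0, 0, 0, 0, 0] : Fin 6 → Fin 3) k = 0 := by fin_cases k <;> rfl
  simp [sym6, h, Fintype.card_perm, Nat.factorial]

lemma covT_witness : covT witness 0 0 0 0 0 0 = 24 := by
  rw [covT_eq_sym6, sym6_zero]
  simp only [preT, covA, covB, covC, covD, covF, sym3_zero, sym4_zero]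
  simp only [mul_assoc, ← Finset.mul_sum]
  simp [witness, Fin.sum_univ_three]

/-- (a) The sextic obstruction `T` vanishes on every metric-form tensor `V_R`;
(b) there is a Weyl-type tensor on which `T` does not vanish. -/
theorem statement10 :
    (∀ R : Matrix (Fin 3) (Fin 3) ℝ, (∀ i j, R i j = R j i) →
      ∀ a b c d e f, covT (VR R) a b c d e f = 0) ∧
    (∃ V : Fin 3 → Fin 3 → Fin 3 → ℝ, IsWeyl V ∧
      ∃ a b c d e f, covT V a b c d e f ≠ 0) := by
  refine ⟨fun R hR a b c d e f => ?_, witness, isWeyl_witness, 0, 0, 0, 0, 0, 0, ?_⟩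
  · rw [covT_eq_sym6, VR_eq_tab R hR]
    exact sym6_eq_zero _ (pair_preT_tab _ _ _ _ _) _ _ _ _ _ _
  · rw [covT_witness]
    norm_num
end
end
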